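/- The constant 1/4 in the interval-assignment lower bound is tight: for every ε > 0 there exist machine types with costs c_k = 2^k, strictly increasing capacities B_k ∈ ℤ≥1 satisfying 2^k/B_k ≥ 2^{k+1}/B_{k+1} for all k, a finite instance J of unit-length jobs, and a valid interval assignment 𝒜 for J such that OPT(J) < (1/4 + ε)·Σ_{(I,t_I,J_I)∈𝒜} 2^{t_I}. -/

import Mathlib

structure SchedInstance where
  jobs : Finset ℕ
  r : ℕ → ℤ
  d : ℕ → ℤ
  window : ∀ j ∈ jobs, r j ≤ d j

structure Batch where
  btype : ℕ
  time : ℤ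
  bjobs : Finset ℕ
deriving DecidableEq

def ValidSchedule (B : ℕ → ℕ) (P : SchedInstance) (S : Finset Batch) : Prop :=
  (∀ X ∈ S, X.bjobs.card ≤ B X.btype) ∧
  (∀ X ∈ S, ∀ j ∈ X.bjobs, j ∈ P.jobs ∧ P.r j ≤ X.time ∧ X.time ≤ P.d j) ∧
  (∀ X ∈ S, ∀ Y ∈ S, X ≠ Y → Disjoint X.bjobs Y.bjobs) ∧
  (∀ j ∈ P.jobs, ∃ X ∈ S, j ∈ X.bjobs)

noncomputable def schedCost (c : ℕ → ℝ) (S : Finset Batch) : ℝ :=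
  ∑ X ∈ S, c X.btype

noncomputable def OPT (c : ℕ → ℝ) (B : ℕ → ℕ) (P : SchedInstance) : ℝ :=
  sInf {x : ℝ | ∃ S : Finset Batch, ValidSchedule B P S ∧ schedCost c S = x}

structure IAItem where
  lo : ℤ
  hi : ℤ
  itype : ℕ
  ijobs : Finset ℕ
deriving DecidableEq

def ValidAssignment (B : ℕ → ℕ) (P : SchedInstance) (A : Finset IAItem) : Prop :=
  (∀ e ∈ A, if e.itype = 0 then e.ijobs.card = 1 else e.ijobs.card = B (e.itype - 1)) ∧
  (∀ e ∈ A, ∀ j ∈ e.ijobs, j ∈ P.jobs ∧ e.lo ≤ P.r j ∧ P.d j ≤ e.hi) ∧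
  (∀ e ∈ A, ∀ e' ∈ A, e ≠ e' → e.itype = e'.itype →
      Set.Icc e.lo e.hi ∩ Set.Icc e'.lo e'.hi = ∅) ∧
  (∀ e ∈ A, ∀ e' ∈ A, e ≠ e' → Disjoint e.ijobs e'.ijobs)

/-!
Write `K = 2 ^ n`, and let capacities equal costs below type `n` and be `K` times the cost from
type `n` on. At each of the times `0, …, K - 1` there are `K` rigid jobs. They are exactly enough
for one point interval of every type `0, …, n`, of total cost `2 * K - 1`, since
`1 + 1 + 2 + ⋯ + K / 2 = K`. A batch of type `n` at each of these times, of cost `K`, processes the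
rigid jobs and leaves `K ^ 2 - K` places unused. Together with one further batch at time `K` this
makes room for `K ^ 3` flexible jobs, which are exactly enough for an interval of type `2 * n + 1`
and cost `2 * K ^ 2`. So the assignment is worth `4 * K ^ 2 - K` against a schedule of cost
`K ^ 2 + K`.
-/

lemma OPT_le_schedCost {c : ℕ → ℝ} (hc : ∀ k, 0 ≤ c k) {B : ℕ → ℕ} {P : SchedInstance}
    {S : Finset Batch} (hS : ValidSchedule B P S) : OPT c B P ≤ schedCost c S := by
  refine csInf_le ⟨0, ?_⟩ ⟨S, hS, rfl⟩
  rintro _ ⟨T, -, rfl⟩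
  exact Finset.sum_nonneg fun X _ => hc X.btype

lemma ValidAssignment.insert {B : ℕ → ℕ} {P : SchedInstance} {A : Finset IAItem} {e : IAItem}
    (hA : ValidAssignment B P A)
    (hcard : if e.itype = 0 then e.ijobs.card = 1 else e.ijobs.card = B (e.itype - 1))
    (hwindow : ∀ j ∈ e.ijobs, j ∈ P.jobs ∧ e.lo ≤ P.r j ∧ P.d j ≤ e.hi)
    (htype : ∀ e' ∈ A, e.itype ≠ e'.itype) (hjobs : ∀ e' ∈ A, Disjoint e.ijobs e'.ijobs) :
    ValidAssignment B P (insert e A) := by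
  obtain ⟨hAcard, hAwindow, hAtype, hAjobs⟩ := hA
  refine ⟨Finset.forall_mem_insert _ _ _ |>.2 ⟨hcard, hAcard⟩,
    Finset.forall_mem_insert _ _ _ |>.2 ⟨hwindow, hAwindow⟩, ?_, ?_⟩
  · intro x hx y hy hne heq
    rcases Finset.mem_insert.1 hx with rfl | hxA <;>
      rcases Finset.mem_insert.1 hy with rfl | hyA
    · exact absurd rfl hne
    · exact absurd heq (htype y hyA)
    · exact absurd heq.symm (htype x hxA)
    · exact hAtype x hxA y hyA hne heq
  · intro x hx y hy hne
    rcases Finset.mem_insert.1 hx with rfl | hxA <;>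
      rcases Finset.mem_insert.1 hy with rfl | hyA
    · exact absurd rfl hne
    · exact hjobs y hyA
    · exact (hjobs x hxA).symm
    · exact hAjobs x hxA y hyA hne

lemma strictMono_of_two_mul_le {B : ℕ → ℕ} (hpos : ∀ k, 1 ≤ B k)
    (hB : ∀ k, 2 * B k ≤ B (k + 1)) : StrictMono B :=
  strictMono_nat_of_lt_succ fun k => by linarith [hpos k, hB k]

lemma two_pow_succ_div_le_of_two_mul_le {a b k : ℕ} (ha : 1 ≤ a) (hab : 2 * a ≤ b) :
    (2 : ℝ) ^ (k + 1) / b ≤ 2 ^ k / a := by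
  have ha' : (0 : ℝ) < a := by exact_mod_cast ha
  have hab' : 2 * (a : ℝ) ≤ b := by exact_mod_cast hab
  calc (2 : ℝ) ^ (k + 1) / b ≤ 2 ^ (k + 1) / (2 * a) :=
        div_le_div_of_nonneg_left (by positivity) (mul_pos two_pos ha') hab'
    _ = 2 ^ k / a := by rw [pow_succ', mul_div_mul_left _ _ two_ne_zero]

/-- The numbers with exactly `t` binary digits, where `0` has none: since `2 ^ 0 / 2 = 0`, the
block of index `0` is `{0}`. -/
def dyadicBlock (t : ℕ) : Finset ℕ := Finset.Ico (2 ^ t / 2) (2 ^ t)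

lemma card_dyadicBlock_zero : (dyadicBlock 0).card = 1 := by simp [dyadicBlock]

lemma card_dyadicBlock_succ (t : ℕ) : (dyadicBlock (t + 1)).card = 2 ^ t := by
  rw [dyadicBlock, Nat.card_Ico, pow_succ]
  omega

lemma dyadicBlock_subset_range {t n : ℕ} (h : t ≤ n) : dyadicBlock t ⊆ Finset.range (2 ^ n) := by
  intro o ho
  exact Finset.mem_range.2
    ((Finset.mem_Ico.1 ho).2.trans_le (Nat.pow_le_pow_right two_pos h))

lemma size_of_mem_dyadicBlock {o t : ℕ} (ho : o ∈ dyadicBlock t) : o.size = t := by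
  obtain ⟨hlo, hhi⟩ := Finset.mem_Ico.1 ho
  refine le_antisymm (Nat.size_le.2 hhi) ?_
  cases t with
  | zero => exact Nat.zero_le _
  | succ t => exact Nat.lt_size.2 (by omega)

lemma disjoint_dyadicBlock {t t' : ℕ} (h : t ≠ t') :
    Disjoint (dyadicBlock t) (dyadicBlock t') :=
  Finset.disjoint_left.2 fun _ ho ho' =>
    h ((size_of_mem_dyadicBlock ho).symm.trans (size_of_mem_dyadicBlock ho'))

/-- The jobs whose labels code the given pairs `(time, index)`. -/
def slotJobs (s : Finset (ℕ × ℕ)) : Finset ℕ := s.map Nat.pairEquiv.toEmbedding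

lemma mem_slotJobs {s : Finset (ℕ × ℕ)} {j : ℕ} : j ∈ slotJobs s ↔ j.unpair ∈ s :=
  Finset.mem_map_equiv

lemma card_slotJobs (s : Finset (ℕ × ℕ)) : (slotJobs s).card = s.card := Finset.card_map _

lemma disjoint_slotJobs {s t : Finset (ℕ × ℕ)} :
    Disjoint (slotJobs s) (slotJobs t) ↔ Disjoint s t :=
  Finset.disjoint_map _

namespace TightInstance

/-- The capacities of the machine types: equal to the cost `2 ^ k` below type `n`, and `2 ^ n` times
the cost from type `n` on. -/
def capacity (n k : ℕ) : ℕ := 2 ^ (if k < n then k else k + n)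

lemma one_le_capacity (n k : ℕ) : 1 ≤ capacity n k := Nat.one_le_two_pow

lemma two_mul_capacity_le (n k : ℕ) : 2 * capacity n k ≤ capacity n (k + 1) := by
  rw [capacity, capacity, ← pow_succ']
  refine Nat.pow_le_pow_right two_pos ?_
  split_ifs <;> omega

lemma capacity_of_lt {n k : ℕ} (h : k < n) : capacity n k = 2 ^ k := by
  rw [capacity, if_pos h]

lemma capacity_of_le {n k : ℕ} (h : n ≤ k) : capacity n k = 2 ^ (k + n) := by
  rw [capacity, if_neg h.not_gt]

/-- The slots of all jobs: a batch of type `n` can be filled at each of the times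
`0, …, 2 ^ n`. -/
def slots (n : ℕ) : Finset (ℕ × ℕ) :=
  Finset.range (2 ^ n + 1) ×ˢ Finset.range (capacity n n)

/-- The slots of the rigid jobs, which have to run at the time of their slot; all other jobs are
flexible. -/
def rigidSlots (n : ℕ) : Finset (ℕ × ℕ) := Finset.range (2 ^ n) ×ˢ Finset.range (2 ^ n)

lemma rigidSlots_subset_slots (n : ℕ) : rigidSlots n ⊆ slots n := by
  refine Finset.product_subset_product (Finset.range_mono (Nat.le_succ _))
    (Finset.range_mono ?_)
  rw [capacity_of_le le_rfl]
  exact Nat.pow_le_pow_right two_pos (Nat.le_add_left n n)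

lemma card_slots_sdiff_rigidSlots (n : ℕ) :
    (slots n \ rigidSlots n).card = capacity n (2 * n) := by
  rw [Finset.card_sdiff_of_subset (rigidSlots_subset_slots n), slots, rigidSlots,
    Finset.card_product, Finset.card_product, Finset.card_range, Finset.card_range,
    Finset.card_range, capacity_of_le le_rfl, capacity_of_le (by omega), pow_add, add_one_mul,
    Nat.add_sub_cancel]
  ring

/-- The tight instance: a rigid job has its own time as its window, a flexible job the whole
horizon `[0, 2 ^ n]`. -/
def tightInstance (n : ℕ) : SchedInstance where
  jobs := slotJobs (slots n)
  r j := if j.unpair ∈ rigidSlots n then j.unpair.1 else 0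
  d j := if j.unpair ∈ rigidSlots n then j.unpair.1 else 2 ^ n
  window j _ := by split_ifs <;> simp

/-- The batch of type `n` that runs all jobs with a slot at time `i`. -/
def timeBatch (n i : ℕ) : Batch :=
  ⟨n, i, slotJobs ({i} ×ˢ Finset.range (capacity n n))⟩

/-- The schedule running every job at the time of its slot. -/
def schedule (n : ℕ) : Finset Batch := (Finset.range (2 ^ n + 1)).image (timeBatch n)

lemma timeBatch_injective (n : ℕ) : Function.Injective (timeBatch n) := fun _ _ h =>
  Nat.cast_injective (congrArg Batch.time h)

lemma mem_bjobs_timeBatch {n i j : ℕ} :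
    j ∈ (timeBatch n i).bjobs ↔ j.unpair.1 = i ∧ j.unpair.2 < capacity n n := by
  simp only [timeBatch, mem_slotJobs, Finset.mem_product, Finset.mem_singleton, Finset.mem_range]

lemma mem_jobs_tightInstance {n j : ℕ} :
    j ∈ (tightInstance n).jobs ↔ j.unpair.1 < 2 ^ n + 1 ∧ j.unpair.2 < capacity n n := by
  simp only [tightInstance, mem_slotJobs, slots, Finset.mem_product, Finset.mem_range]

lemma slot_time_mem_window {n j : ℕ} (hj : j ∈ (tightInstance n).jobs) :
    (tightInstance n).r j ≤ j.unpair.1 ∧ (j.unpair.1 : ℤ) ≤ (tightInstance n).d j := by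
  have htime : (j.unpair.1 : ℤ) ≤ 2 ^ n := by
    exact_mod_cast Nat.lt_succ_iff.1 (mem_jobs_tightInstance.1 hj).1
  simp only [tightInstance]
  split_ifs
  · exact ⟨le_rfl, le_rfl⟩
  · exact ⟨Nat.cast_nonneg _, htime⟩

lemma validSchedule_schedule (n : ℕ) :
    ValidSchedule (capacity n) (tightInstance n) (schedule n) := by
  simp only [ValidSchedule, schedule, Finset.forall_mem_image, Finset.exists_mem_image]
  refine ⟨fun i _ => ?_, fun i hi j hj => ?_, fun _ _ _ _ hne => ?_, fun j hj => ?_⟩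
  · simp only [timeBatch, card_slotJobs, Finset.card_product, Finset.card_singleton,
      Finset.card_range, one_mul, le_refl]
  · obtain ⟨rfl, hindex⟩ := mem_bjobs_timeBatch.1 hj
    have hjob := mem_jobs_tightInstance.2 ⟨Finset.mem_range.1 hi, hindex⟩
    exact ⟨hjob, slot_time_mem_window hjob⟩
  · exact disjoint_slotJobs.2 (Finset.disjoint_product.2
      (.inl (Finset.disjoint_singleton.2 fun htime => hne (congrArg _ htime))))
  · obtain ⟨htime, hindex⟩ := mem_jobs_tightInstance.1 hj
    exact ⟨j.unpair.1, Finset.mem_range.2 htime, mem_bjobs_timeBatch.2 ⟨rfl, hindex⟩⟩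

lemma schedCost_schedule (n : ℕ) :
    schedCost (fun k => (2 : ℝ) ^ k) (schedule n) = (2 ^ n + 1) * 2 ^ n := by
  rw [schedCost, schedule, Finset.sum_image (timeBatch_injective n).injOn]
  simp [timeBatch]

/-- The item of type `p.2` on the interval `{p.1}`, to which the rigid jobs are assigned whose
index at time `p.1` has `p.2` binary digits. -/
def pointItem (p : ℕ × ℕ) : IAItem := ⟨p.1, p.1, p.2, slotJobs ({p.1} ×ˢ dyadicBlock p.2)⟩

/-- The point items of types `0, …, n` at the times `0, …, 2 ^ n - 1`. -/
def pointItems (n : ℕ) : Finset IAItem :=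
  (Finset.range (2 ^ n) ×ˢ Finset.range (n + 1)).image pointItem

/-- The item of type `2 * n + 1` on the whole horizon, to which all flexible jobs are
assigned. -/
def horizonItem (n : ℕ) : IAItem := ⟨0, 2 ^ n, 2 * n + 1, slotJobs (slots n \ rigidSlots n)⟩

/-- The interval assignment whose value approaches four times the optimum. -/
def assignment (n : ℕ) : Finset IAItem := insert (horizonItem n) (pointItems n)

lemma pointItem_injective : Function.Injective pointItem := fun _ _ h =>
  Prod.ext (Nat.cast_injective (congrArg IAItem.lo h)) (congrArg IAItem.itype h)

lemma mem_pointItems {n : ℕ} {e : IAItem} :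
    e ∈ pointItems n ↔ ∃ p : ℕ × ℕ, (p.1 < 2 ^ n ∧ p.2 ≤ n) ∧ pointItem p = e := by
  simp only [pointItems, Finset.mem_image, Finset.mem_product, Finset.mem_range, Nat.lt_succ_iff]

lemma slots_pointItem_subset_rigidSlots {n : ℕ} {p : ℕ × ℕ} (htime : p.1 < 2 ^ n)
    (htype : p.2 ≤ n) : {p.1} ×ˢ dyadicBlock p.2 ⊆ rigidSlots n :=
  Finset.product_subset_product
    (Finset.singleton_subset_iff.2 (Finset.mem_range.2 htime)) (dyadicBlock_subset_range htype)

lemma card_ijobs_pointItem {n : ℕ} {p : ℕ × ℕ} (htype : p.2 ≤ n) :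
    if p.2 = 0 then (pointItem p).ijobs.card = 1
    else (pointItem p).ijobs.card = capacity n (p.2 - 1) := by
  obtain ⟨i, t⟩ := p
  simp only [pointItem, card_slotJobs, Finset.card_product, Finset.card_singleton, one_mul]
  cases t with
  | zero => exact card_dyadicBlock_zero
  | succ t =>
    rw [if_neg t.succ_ne_zero, card_dyadicBlock_succ, Nat.add_sub_cancel, capacity_of_lt htype]

lemma disjoint_ijobs_pointItem {p q : ℕ × ℕ} (h : p ≠ q) :
    Disjoint (pointItem p).ijobs (pointItem q).ijobs := by
  refine disjoint_slotJobs.2 (Finset.disjoint_product.2 ?_)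
  by_cases htime : p.1 = q.1
  · exact .inr (disjoint_dyadicBlock fun htype => h (Prod.ext htime htype))
  · exact .inl (Finset.disjoint_singleton.2 htime)

lemma validAssignment_pointItems (n : ℕ) :
    ValidAssignment (capacity n) (tightInstance n) (pointItems n) := by
  refine ⟨fun e he => ?_, fun e he j hj => ?_, fun e he e' he' hne htype => ?_,
    fun e he e' he' hne => ?_⟩ <;> obtain ⟨p, ⟨hp₁, hp₂⟩, rfl⟩ := mem_pointItems.1 he
  · exact card_ijobs_pointItem hp₂
  · have hslot := mem_slotJobs.1 hj
    have hrigid := slots_pointItem_subset_rigidSlots hp₁ hp₂ hslot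
    have htime : j.unpair.1 = p.1 := Finset.mem_singleton.1 (Finset.mem_product.1 hslot).1
    refine ⟨mem_slotJobs.2 (rigidSlots_subset_slots n hrigid), ?_, ?_⟩ <;>
      simp only [tightInstance, pointItem, if_pos hrigid, htime, le_refl]
  · obtain ⟨q, -, rfl⟩ := mem_pointItems.1 he'
    have htime : p.1 ≠ q.1 := fun h => hne (congrArg _ (Prod.ext h htype))
    simpa only [pointItem, Set.Icc_self, Set.singleton_inter_eq_empty, Set.mem_singleton_iff,
      Nat.cast_inj] using htime
  · obtain ⟨q, -, rfl⟩ := mem_pointItems.1 he'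
    exact disjoint_ijobs_pointItem fun h => hne (congrArg _ h)

lemma itype_horizonItem_ne {n : ℕ} {e : IAItem} (he : e ∈ pointItems n) :
    (horizonItem n).itype ≠ e.itype := by
  obtain ⟨p, ⟨-, htype⟩, rfl⟩ := mem_pointItems.1 he
  simp only [horizonItem, pointItem]
  omega

lemma disjoint_ijobs_horizonItem {n : ℕ} {e : IAItem} (he : e ∈ pointItems n) :
    Disjoint (horizonItem n).ijobs e.ijobs := by
  obtain ⟨p, ⟨htime, htype⟩, rfl⟩ := mem_pointItems.1 he
  exact disjoint_slotJobs.2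
    (Finset.sdiff_disjoint.mono_right (slots_pointItem_subset_rigidSlots htime htype))

lemma validAssignment_assignment (n : ℕ) :
    ValidAssignment (capacity n) (tightInstance n) (assignment n) := by
  refine (validAssignment_pointItems n).insert ?_ (fun j hj => ?_)
    (fun _ => itype_horizonItem_ne) (fun _ => disjoint_ijobs_horizonItem)
  · simp only [horizonItem, card_slotJobs, card_slots_sdiff_rigidSlots, Nat.add_sub_cancel,
      Nat.succ_ne_zero, if_false]
  · obtain ⟨hslot, hflexible⟩ := Finset.mem_sdiff.1 (mem_slotJobs.1 hj)
    refine ⟨mem_slotJobs.2 hslot, ?_, ?_⟩ <;>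
      simp only [tightInstance, horizonItem, if_neg hflexible, le_refl]

lemma sum_pointItems (n : ℕ) :
    ∑ e ∈ pointItems n, (2 : ℝ) ^ e.itype = 2 ^ n * (2 * 2 ^ n - 1) := by
  rw [pointItems, Finset.sum_image pointItem_injective.injOn, Finset.sum_product]
  simp only [pointItem, Finset.sum_const, Finset.card_range, nsmul_eq_mul]
  rw [geom_sum_eq (by norm_num)]
  push_cast
  ring

lemma sum_assignment (n : ℕ) :
    ∑ e ∈ assignment n, (2 : ℝ) ^ e.itype = 2 ^ n * (4 * 2 ^ n - 1) := by
  have hnew : horizonItem n ∉ pointItems n := fun h => itype_horizonItem_ne h rfl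
  rw [assignment, Finset.sum_insert hnew, sum_pointItems]
  simp only [horizonItem]
  ring

lemma OPT_tightInstance_le (n : ℕ) :
    OPT (fun k => (2 : ℝ) ^ k) (capacity n) (tightInstance n) ≤ (2 ^ n + 1) * 2 ^ n :=
  (OPT_le_schedCost (fun _ => by positivity) (validSchedule_schedule n)).trans_eq
    (schedCost_schedule n)

end TightInstance

lemma add_one_mul_self_lt_of_one_lt_mul {ε K : ℝ} (hε : 0 < ε) (hK : 1 ≤ K) (h : 1 < K * ε) :
    (K + 1) * K < (1 / 4 + ε) * (K * (4 * K - 1)) := by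
  have hεK : ε ≤ K * ε := le_mul_of_one_le_left hε.le hK
  have hfactor : K + 1 < (1 / 4 + ε) * (4 * K - 1) := by linarith
  calc (K + 1) * K < (1 / 4 + ε) * (4 * K - 1) * K := by gcongr
    _ = (1 / 4 + ε) * (K * (4 * K - 1)) := by ring

/-- the constant 1/4 in the interval-assignment lower bound is tight:
for every ε > 0 there are machine types with costs `2^k`, strictly increasing
capacities `B k ≥ 1` with non-increasing cost-per-job, an instance `J` and a valid
interval assignment `𝒜` with `OPT(J) < (1/4 + ε) · ∑_{(I,t_I,J_I) ∈ 𝒜} 2^{t_I}`. -/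
theorem lower_bound_constant_tight :
    ∀ ε : ℝ, 0 < ε →
      ∃ B : ℕ → ℕ, (∀ k, 1 ≤ B k) ∧ StrictMono B ∧
        (∀ k, (2 : ℝ) ^ (k + 1) / (B (k + 1) : ℝ) ≤ (2 : ℝ) ^ k / (B k : ℝ)) ∧
        ∃ (P : SchedInstance) (A : Finset IAItem),
          ValidAssignment B P A ∧
          OPT (fun k => (2 : ℝ) ^ k) B P
            < (1 / 4 + ε) * ∑ e ∈ A, (2 : ℝ) ^ e.itype := by
  intro ε hε
  obtain ⟨n, hn⟩ := pow_unbounded_of_one_lt (1 / ε) (one_lt_two : (1 : ℝ) < 2)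
  refine ⟨TightInstance.capacity n, TightInstance.one_le_capacity n,
    strictMono_of_two_mul_le (TightInstance.one_le_capacity n)
      (TightInstance.two_mul_capacity_le n),
    fun k => two_pow_succ_div_le_of_two_mul_le (TightInstance.one_le_capacity n k)
      (TightInstance.two_mul_capacity_le n k),
    TightInstance.tightInstance n, TightInstance.assignment n,
    TightInstance.validAssignment_assignment n, ?_⟩
  rw [TightInstance.sum_assignment]
  exact (TightInstance.OPT_tightInstance_le n).trans_lt
    (add_one_mul_self_lt_of_one_lt_mul hε (one_le_pow₀ one_le_two) ((div_lt_iff₀ hε).1 hn))
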